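/- arXiv:1409.5767 — 3 statements merged into one kernel-verified Lean document; each statement's English description precedes it below -/
import Mathlib

section
/- Let n ≥ 1 and let S be an n × n matrix with natural-number entries, each entry being 0 or 1. For a positive integer m let θ(m) denote the number of rotation orbits of aperiodic closed walks of length m. Then for every positive integer N the following identity holds in ℚ: θ(N) = Tr(S^N)/N − ∑_{g | N, g ≠ 1} (1/g) · θ(N/g), the sum running over the positive divisors g of N with g ≠ 1. -/
/-- A closed walk of length `N` with respect to an `n × n` zero-one matrix `S`:
a function `f : ZMod N → Fin n` such that consecutive vertices are adjacent. -/
def IsClosedWalk {n : ℕ} (S : Matrix (Fin n) (Fin n) ℕ) {N : ℕ}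
    (f : ZMod N → Fin n) : Prop :=
  ∀ k : ZMod N, S (f k) (f (k + 1)) = 1

/-- A closed walk is aperiodic if no nonzero rotation fixes it. -/
def IsAperiodic {n N : ℕ} (f : ZMod N → Fin n) : Prop :=
  ∀ d : ZMod N, d ≠ 0 → ∃ k : ZMod N, f (k + d) ≠ f k

/-- The type of aperiodic closed walks of length `N`. -/
def AperiodicWalk {n : ℕ} (S : Matrix (Fin n) (Fin n) ℕ) (N : ℕ) : Type :=
  {f : ZMod N → Fin n // IsClosedWalk S f ∧ IsAperiodic f}

/-- The rotation action of the additive group `ZMod N` on aperiodic closed walks: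
`d` sends `f` to `k ↦ f (k + d)`. -/
def rotAction {n : ℕ} (S : Matrix (Fin n) (Fin n) ℕ) (N : ℕ)
    (d : ZMod N) (f : AperiodicWalk S N) : AperiodicWalk S N :=
  ⟨fun k => f.1 (k + d), by
    obtain ⟨hw, ha⟩ := f.2
    constructor
    · intro k; simpa [add_right_comm] using hw (k + d)
    · intro e he
      obtain ⟨k, hk⟩ := ha e he
      exact ⟨k - d, by simpa [add_right_comm, sub_add_cancel] using hk⟩⟩

/-- Two aperiodic closed walks are equivalent if one is a rotation of the other. -/
def RotRel {n : ℕ} (S : Matrix (Fin n) (Fin n) ℕ) (N : ℕ)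
    (f g : AperiodicWalk S N) : Prop :=
  ∃ d : ZMod N, g = rotAction S N d f

/-- `theta S m` is the number of rotation orbits of aperiodic closed walks of
length `m` with respect to the matrix `S`. -/
noncomputable def theta {n : ℕ} (S : Matrix (Fin n) (Fin n) ℕ) (m : ℕ) : ℕ :=
  Nat.card (Quot (RotRel S m))

open Function

/-- The left shift on sequences. -/
def seqShift {α : Type*} (x : ℕ → α) : ℕ → α := fun k => x (k + 1)

theorem seqShift_iterate_apply {α : Type*} (x : ℕ → α) (j k : ℕ) :
    seqShift^[j] x k = x (k + j) := by
  induction j generalizing k with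
  | zero => rfl
  | succ j ih =>
    rw [iterate_succ_apply', seqShift, ih]
    congr 1
    omega

/-- The periodic sequence obtained by unrolling a function on `ZMod m`. -/
def unroll {α : Type*} {m : ℕ} (f : ZMod m → α) : ℕ → α := fun k => f k

theorem unroll_injective {α : Type*} {m : ℕ} [NeZero m] :
    Injective (unroll : (ZMod m → α) → ℕ → α) := by
  intro f g h
  funext k
  simpa [unroll] using congrFun h k.val

theorem isPeriodicPt_unroll_iff {α : Type*} {m : ℕ} [NeZero m] (f : ZMod m → α) (j : ℕ) :
    IsPeriodicPt seqShift j (unroll f) ↔ ∀ k : ZMod m, f (k + j) = f k := by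
  constructor
  · intro h k
    have hk := congrFun h k.val
    rw [seqShift_iterate_apply] at hk
    simpa [unroll] using hk
  · intro h
    funext k
    rw [seqShift_iterate_apply]
    simpa [unroll] using h k

theorem isPeriodicPt_unroll {α : Type*} {m : ℕ} [NeZero m] (f : ZMod m → α) :
    IsPeriodicPt seqShift m (unroll f) :=
  (isPeriodicPt_unroll_iff f m).2 fun k => by simp

theorem isAperiodic_iff_minimalPeriod_unroll {n m : ℕ} [NeZero m] (f : ZMod m → Fin n) :
    IsAperiodic f ↔ minimalPeriod seqShift (unroll f) = m := by
  constructor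
  · intro h
    refine Nat.dvd_antisymm (isPeriodicPt_unroll f).minimalPeriod_dvd ?_
    rw [← ZMod.natCast_eq_zero_iff]
    by_contra hd
    obtain ⟨k, hk⟩ := h _ hd
    exact hk ((isPeriodicPt_unroll_iff f _).1 (isPeriodicPt_minimalPeriod _ _) k)
  · intro h d hd
    by_contra! hk
    have hp : IsPeriodicPt seqShift d.val (unroll f) :=
      (isPeriodicPt_unroll_iff f _).2 (by simpa using hk)
    have hdvd := hp.minimalPeriod_dvd
    rw [h, ← ZMod.natCast_eq_zero_iff] at hdvd
    exact hd (by simpa using hdvd)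

theorem isClosedWalk_iff_unroll {n m : ℕ} [NeZero m] (S : Matrix (Fin n) (Fin n) ℕ)
    (f : ZMod m → Fin n) :
    IsClosedWalk S f ↔ ∀ k : ℕ, S (unroll f k) (unroll f (k + 1)) = 1 := by
  constructor
  · intro h k
    simpa [unroll] using h k
  · intro h k
    simpa [unroll] using h k.val

theorem exists_unroll_eq {α : Type*} {m : ℕ} [NeZero m] {x : ℕ → α}
    (hx : IsPeriodicPt seqShift m x) : ∃ f : ZMod m → α, unroll f = x := by
  refine ⟨fun k => x k.val, funext fun k => ?_⟩
  have hper : Periodic x m := fun k => by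
    rw [← seqShift_iterate_apply x m k]
    exact congrFun hx k
  simp only [unroll, ZMod.val_natCast]
  exact hper.map_mod_nat k

theorem unroll_comp_cast {α : Type*} {m N : ℕ} (h : m ∣ N) (f : ZMod m → α) :
    unroll (fun k : ZMod N => f k.cast) = unroll f := by
  funext k
  simp [unroll, ZMod.cast_natCast h]

instance finite_aperiodicWalk {n : ℕ} (S : Matrix (Fin n) (Fin n) ℕ) (m : ℕ) [NeZero m] :
    Finite (AperiodicWalk S m) :=
  inferInstanceAs (Finite {f : ZMod m → Fin n // IsClosedWalk S f ∧ IsAperiodic f})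

/-- Every closed walk is a repetition of a unique aperiodic one. -/
theorem card_closedWalk_eq_sum_card_aperiodicWalk {n : ℕ} (S : Matrix (Fin n) (Fin n) ℕ)
    (N : ℕ) [NeZero N] :
    Nat.card {f : ZMod N → Fin n // IsClosedWalk S f} =
      ∑ m ∈ N.divisors, Nat.card (AperiodicWalk S m) := by
  have hne (m : N.divisors) : NeZero (m : ℕ) := ⟨(Nat.pos_of_mem_divisors m.2).ne'⟩
  rw [← Finset.sum_coe_sort, ← Nat.card_sigma]
  symm
  refine Nat.card_eq_of_bijective
    (fun p : (Σ m : N.divisors, AperiodicWalk S m) =>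
      (⟨fun k : ZMod N => p.2.1 k.cast, by
        have := hne p.1
        rw [isClosedWalk_iff_unroll, unroll_comp_cast (Nat.dvd_of_mem_divisors p.1.2),
          ← isClosedWalk_iff_unroll]
        exact p.2.2.1⟩ : {f : ZMod N → Fin n // IsClosedWalk S f})) ⟨?_, ?_⟩
  · rintro ⟨⟨m, hm⟩, f⟩ ⟨⟨m', hm'⟩, f'⟩ h
    have : NeZero m := hne ⟨m, hm⟩
    have : NeZero m' := hne ⟨m', hm'⟩
    have hu : unroll f.1 = unroll f'.1 := by
      rw [← unroll_comp_cast (Nat.dvd_of_mem_divisors hm),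
        ← unroll_comp_cast (Nat.dvd_of_mem_divisors hm')]
      exact congrArg unroll (congrArg Subtype.val h)
    obtain rfl : m = m' :=
      ((isAperiodic_iff_minimalPeriod_unroll f.1).1 f.2.2).symm.trans
        ((congrArg _ hu).trans ((isAperiodic_iff_minimalPeriod_unroll f'.1).1 f'.2.2))
    obtain rfl : f = f' := Subtype.ext (unroll_injective hu)
    rfl
  · rintro ⟨w, hw⟩
    have hdvd := (isPeriodicPt_unroll w).minimalPeriod_dvd
    have hmem := Nat.mem_divisors.2 ⟨hdvd, NeZero.ne N⟩
    have : NeZero (minimalPeriod seqShift (unroll w)) := hne ⟨_, hmem⟩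
    obtain ⟨f, hf⟩ := exists_unroll_eq (isPeriodicPt_minimalPeriod seqShift (unroll w))
    refine ⟨⟨⟨_, hmem⟩, ⟨f, ?_, ?_⟩⟩, Subtype.ext (unroll_injective ?_)⟩
    · rwa [isClosedWalk_iff_unroll, hf, ← isClosedWalk_iff_unroll]
    · rw [isAperiodic_iff_minimalPeriod_unroll, hf]
    · exact (unroll_comp_cast hdvd f).trans hf

theorem rotRel_equivalence {n : ℕ} (S : Matrix (Fin n) (Fin n) ℕ) (m : ℕ) :
    Equivalence (RotRel S m) where
  refl f := ⟨0, Subtype.ext (by simp [rotAction])⟩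
  symm := by
    rintro f _ ⟨d, rfl⟩
    exact ⟨-d, Subtype.ext (by simp [rotAction])⟩
  trans := by
    rintro f _ _ ⟨d, rfl⟩ ⟨e, rfl⟩
    exact ⟨e + d, Subtype.ext (by simp [rotAction, add_assoc])⟩

theorem rotAction_left_injective {n : ℕ} (S : Matrix (Fin n) (Fin n) ℕ) (m : ℕ)
    (f : AperiodicWalk S m) : Injective fun d => rotAction S m d f := by
  intro d e h
  by_contra hde
  obtain ⟨k, hk⟩ := f.2.2 (d - e) (sub_ne_zero.2 hde)
  apply hk
  have := congrFun (congrArg Subtype.val h) (k - e)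
  simpa [rotAction, sub_add_eq_add_sub, add_sub_assoc] using this

/-- Rotation acts freely on aperiodic closed walks, so every orbit has `m` elements. -/
theorem card_aperiodicWalk {n : ℕ} (S : Matrix (Fin n) (Fin n) ℕ) (m : ℕ) :
    Nat.card (AperiodicWalk S m) = m * theta S m := by
  have hprod : Nat.card (Quot (RotRel S m) × ZMod m) = m * theta S m := by
    rw [Nat.card_prod, Nat.card_zmod, mul_comm, theta]
  rw [← hprod]
  symm
  refine Nat.card_eq_of_bijective
    (fun p : Quot (RotRel S m) × ZMod m => rotAction S m p.2 p.1.out) ⟨?_, ?_⟩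
  · rintro ⟨q, d⟩ ⟨q', d'⟩ h
    have hmk (q : Quot (RotRel S m)) (d : ZMod m) :
        Quot.mk (RotRel S m) (rotAction S m d q.out) = q :=
      (Quot.sound ⟨d, rfl⟩).symm.trans q.out_eq
    obtain rfl : q = q' := by
      rw [← hmk q d, ← hmk q' d']
      exact congrArg _ h
    exact congrArg (Prod.mk q) (rotAction_left_injective S m _ h)
  · intro f
    have hrel := Quot.eqvGen_exact (Quot.mk (RotRel S m) f).out_eq
    rw [(rotRel_equivalence S m).eqvGen_iff] at hrel
    obtain ⟨d, hd⟩ := hrel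
    exact ⟨⟨_, d⟩, hd.symm⟩

theorem Matrix.pow_succ_apply_eq_sum_prod {R ι : Type*} [CommSemiring R] [Fintype ι]
    [DecidableEq ι] (S : Matrix ι ι R) (N : ℕ) (i j : ι) :
    (S ^ (N + 1)) i j = ∑ p : Fin N → ι, ∏ k : Fin (N + 1),
      S ((Fin.cons i p : Fin (N + 1) → ι) k) ((Fin.snoc p j : Fin (N + 1) → ι) k) := by
  induction N generalizing i with
  | zero => simp [Fin.snoc]
  | succ N ih =>
    rw [pow_succ', Matrix.mul_apply, ← (Fin.consEquiv fun _ => ι).sum_comp,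
      Fintype.sum_prod_type]
    refine Finset.sum_congr rfl fun a _ => ?_
    rw [ih, Finset.mul_sum]
    refine Finset.sum_congr rfl fun p _ => ?_
    rw [Fin.prod_univ_succ (n := N + 1)]
    simp [Fin.consEquiv, ← Fin.cons_snoc_eq_snoc_cons]

theorem Matrix.trace_pow_succ_eq_sum_prod {R ι : Type*} [CommSemiring R] [Fintype ι]
    [DecidableEq ι] (S : Matrix ι ι R) (N : ℕ) :
    (S ^ (N + 1)).trace = ∑ f : Fin (N + 1) → ι, ∏ k, S (f k) (f (k + 1)) := by
  rw [← (Fin.consEquiv fun _ => ι).sum_comp, Fintype.sum_prod_type]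
  simp [Matrix.trace, Matrix.pow_succ_apply_eq_sum_prod, Fin.snoc_eq_cons_rotate, Fin.consEquiv]

theorem trace_pow_eq_card_closedWalk {n : ℕ} (S : Matrix (Fin n) (Fin n) ℕ)
    (hS : ∀ i j, S i j = 0 ∨ S i j = 1) (N : ℕ) [NeZero N] :
    (S ^ N).trace = Nat.card {f : ZMod N → Fin n // IsClosedWalk S f} := by
  classical
  obtain ⟨N, rfl⟩ := Nat.exists_eq_succ_of_ne_zero (NeZero.ne N)
  rw [Nat.card_eq_fintype_card, Fintype.card_subtype, Finset.card_filter]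
  refine (Matrix.trace_pow_succ_eq_sum_prod S N).trans
    (Finset.sum_congr rfl fun f _ => ?_)
  split_ifs with h
  · exact Finset.prod_eq_one fun k _ => h k
  · obtain ⟨k, hk⟩ := not_forall.1 h
    exact Finset.prod_eq_zero (Finset.mem_univ k) ((hS _ _).resolve_right hk)

theorem theta_recursion
    (n : ℕ) (hn : 1 ≤ n) (S : Matrix (Fin n) (Fin n) ℕ)
    (hS : ∀ i j, S i j = 0 ∨ S i j = 1) (N : ℕ) (hN : 0 < N) :
    (theta S N : ℚ) =
      ((Matrix.trace (S ^ N) : ℕ) : ℚ) / N -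
        ∑ g ∈ N.divisors.erase 1, (1 / (g : ℚ)) * (theta S (N / g) : ℚ) := by
  have : NeZero N := ⟨hN.ne'⟩
  have htrace : (S ^ N).trace = ∑ g ∈ N.divisors, (N / g) * theta S (N / g) := by
    rw [trace_pow_eq_card_closedWalk S hS, card_closedWalk_eq_sum_card_aperiodicWalk,
      ← Nat.sum_div_divisors]
    simp only [card_aperiodicWalk]
  have hsum : ((S ^ N).trace : ℚ) / N =
      ∑ g ∈ N.divisors, (1 / (g : ℚ)) * (theta S (N / g) : ℚ) := by
    rw [htrace, Nat.cast_sum, Finset.sum_div]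
    refine Finset.sum_congr rfl fun g hg => ?_
    have hg0 : (g : ℚ) ≠ 0 := by exact_mod_cast (Nat.pos_of_mem_divisors hg).ne'
    have hN0 : (N : ℚ) ≠ 0 := by exact_mod_cast hN.ne'
    rw [Nat.cast_mul, Nat.cast_div (Nat.dvd_of_mem_divisors hg) hg0]
    field_simp
  rw [hsum, ← Finset.add_sum_erase _ _ (Nat.one_mem_divisors.2 hN.ne')]
  simp
end

section
/- Let R be a commutative ring, T a square matrix over R, and l a positive integer. For every positive integer N, S(N, T^l) = ∑ S(t,T), where the sum runs over all positive integers t with lcm(l,t) = N·l (all such t divide N·l, so the sum is finite). -/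
/-- `S(N,T) = ∑_{g ∣ N} μ(g) · Tr(T^{N/g})` for a square matrix `T` over a
commutative ring. -/
def moebiusTraceSum {R : Type*} [CommRing R] {α : Type*} [Fintype α]
    [DecidableEq α] (T : Matrix α α R) (N : ℕ) : R :=
  ∑ g ∈ N.divisors, (ArithmeticFunction.moebius g) • Matrix.trace (T ^ (N / g))

theorem moebiusTraceSum_eq_sum_divisorsAntidiagonal {R : Type*} [CommRing R] {α : Type*}
    [Fintype α] [DecidableEq α] (T : Matrix α α R) (N : ℕ) :
    moebiusTraceSum T N = ∑ x ∈ N.divisorsAntidiagonal,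
      (ArithmeticFunction.moebius x.1) • Matrix.trace (T ^ x.2) :=
  (Nat.sum_divisorsAntidiagonal
    (fun g d => (ArithmeticFunction.moebius g) • Matrix.trace (T ^ d))).symm

theorem sum_divisors_moebiusTraceSum {R : Type*} [CommRing R] {α : Type*}
    [Fintype α] [DecidableEq α] (T : Matrix α α R) {N : ℕ} (hN : 0 < N) :
    ∑ t ∈ N.divisors, moebiusTraceSum T t = Matrix.trace (T ^ N) :=
  ArithmeticFunction.sum_eq_iff_sum_smul_moebius_eq
    (f := moebiusTraceSum T) (g := fun n => Matrix.trace (T ^ n)) |>.mpr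
    (fun n _ => (moebiusTraceSum_eq_sum_divisorsAntidiagonal T n).symm) N hN

/-- The divisors of `N * l` are partitioned by the value of `lcm l t`. -/
theorem sum_divisors_sum_filter_lcm {M : Type*} [AddCommMonoid M] (f : ℕ → M) {l N : ℕ}
    (hl : 0 < l) (hN : 0 < N) :
    ∑ d ∈ N.divisors, ∑ t ∈ (d * l).divisors.filter (fun t => Nat.lcm l t = d * l), f t =
      ∑ t ∈ (N * l).divisors, f t := by
  have maps_to : ∀ t ∈ (N * l).divisors, Nat.lcm l t / l ∈ N.divisors := by
    intro t ht
    refine Nat.mem_divisors.mpr ⟨?_, hN.ne'⟩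
    rw [Nat.div_dvd_iff_dvd_mul (Nat.dvd_lcm_left l t) hl, mul_comm l N]
    exact Nat.lcm_dvd (Nat.dvd_mul_left l N) (Nat.dvd_of_mem_divisors ht)
  rw [← Finset.sum_fiberwise_of_maps_to maps_to]
  refine Finset.sum_congr rfl fun d hd => Finset.sum_congr ?_ fun _ _ => rfl
  have hdN := Nat.dvd_of_mem_divisors hd
  have hd_pos : 0 < d := Nat.pos_of_mem_divisors hd
  ext t
  simp only [Finset.mem_filter, Nat.mem_divisors,
    Nat.div_eq_iff_eq_mul_left hl (Nat.dvd_lcm_left l t)]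
  constructor
  · rintro ⟨⟨ht, -⟩, h⟩
    exact ⟨⟨ht.trans (Nat.mul_dvd_mul_right hdN l), by positivity⟩, h⟩
  · rintro ⟨-, h⟩
    exact ⟨⟨h ▸ Nat.dvd_lcm_right l t, by positivity⟩, h⟩

theorem metropolis_rota_relation
    {R : Type*} [CommRing R] {α : Type*} [Fintype α] [DecidableEq α]
    (T : Matrix α α R) (l : ℕ) (hl : 0 < l) (N : ℕ) (hN : 0 < N) :
    moebiusTraceSum (T ^ l) N =
      ∑ t ∈ (N * l).divisors.filter (fun t => Nat.lcm l t = N * l),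
        moebiusTraceSum T t := by
  rw [moebiusTraceSum_eq_sum_divisorsAntidiagonal]
  refine ArithmeticFunction.sum_eq_iff_sum_smul_moebius_eq
    (f := fun n => ∑ t ∈ (n * l).divisors.filter (fun t => Nat.lcm l t = n * l),
      moebiusTraceSum T t)
    (g := fun n => Matrix.trace ((T ^ l) ^ n)) |>.mp (fun n hn => ?_) N hN
  rw [sum_divisors_sum_filter_lcm _ hl hn, sum_divisors_moebiusTraceSum T (Nat.mul_pos hn hl),
    ← pow_mul, mul_comm l n]
end

section
/- Let T1 be an m × m matrix over ℚ and T2 an n × n matrix over ℚ. For every positive integer N, ∑ gcd(s,t) · C(s,T1) · C(t,T2) = C(N, T1 ⊗ T2), where the sum runs over all pairs (s,t) of positive divisors of N with lcm(s,t) = N, and T1 ⊗ T2 denotes the Kronecker product. -/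
open Kronecker

/-- `C(N,T) = (1/N) ∑_{g ∣ N} μ(g) · Tr(T^{N/g})` for a square matrix `T` over `ℚ`. -/
def cycleCount {α : Type*} [Fintype α] [DecidableEq α]
    (T : Matrix α α ℚ) (N : ℕ) : ℚ :=
  (∑ g ∈ N.divisors, (ArithmeticFunction.moebius g : ℚ) *
    Matrix.trace (T ^ (N / g))) / N

open ArithmeticFunction in
/-- Möbius inversion: the numbers `C(n, T)` are determined by the traces of the powers of `T`. -/
theorem sum_divisors_mul_eq_trace_iff {α : Type*} [Fintype α] [DecidableEq α]
    (T : Matrix α α ℚ) (f : ℕ → ℚ) :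
    (∀ n > 0, ∑ d ∈ n.divisors, d * f d = Matrix.trace (T ^ n)) ↔
      ∀ n > 0, f n = cycleCount T n := by
  rw [sum_eq_iff_sum_mul_moebius_eq (f := fun d : ℕ => (d : ℚ) * f d)
    (g := fun n => Matrix.trace (T ^ n))]
  refine forall₂_congr fun n hn => ?_
  have hn' : (n : ℚ) ≠ 0 := by exact_mod_cast hn.ne'
  rw [Nat.sum_divisorsAntidiagonal (fun i j => (moebius i : ℚ) * Matrix.trace (T ^ j)),
    cycleCount, eq_div_iff hn', mul_comm, eq_comm]

theorem sum_divisors_mul_cycleCount {α : Type*} [Fintype α] [DecidableEq α]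
    (T : Matrix α α ℚ) {n : ℕ} (hn : 0 < n) :
    ∑ d ∈ n.divisors, d * cycleCount T d = Matrix.trace (T ^ n) :=
  (sum_divisors_mul_eq_trace_iff T _).2 (fun _ _ => rfl) n hn

theorem Matrix.kronecker_pow {R α β : Type*} [CommSemiring R] [Fintype α] [DecidableEq α]
    [Fintype β] [DecidableEq β] (A : Matrix α α R) (B : Matrix β β R) (n : ℕ) :
    (A ⊗ₖ B) ^ n = (A ^ n) ⊗ₖ (B ^ n) := by
  induction n with
  | zero => simp
  | succ n ih => rw [pow_succ, pow_succ, pow_succ, ih, Matrix.mul_kronecker_mul]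

/-- Pairs of divisors of `n`, grouped by their least common multiple. -/
theorem sum_divisors_sum_lcm_eq {M : Type*} [AddCommMonoid M] (f : ℕ × ℕ → M) {n : ℕ}
    (hn : n ≠ 0) :
    ∑ d ∈ n.divisors, ∑ p ∈ (d.divisors ×ˢ d.divisors).filter (fun p => Nat.lcm p.1 p.2 = d),
      f p = ∑ p ∈ n.divisors ×ˢ n.divisors, f p := by
  rw [← Finset.sum_fiberwise_of_maps_to (t := n.divisors) (g := fun p : ℕ × ℕ => Nat.lcm p.1 p.2)]
  · refine Finset.sum_congr rfl fun d hd => Finset.sum_congr ?_ fun _ _ => rfl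
    have hdn := Nat.dvd_of_mem_divisors hd
    have hd0 : d ≠ 0 := ne_zero_of_dvd_ne_zero hn hdn
    ext ⟨s, t⟩
    simp only [Finset.mem_filter, Finset.mem_product, Nat.mem_divisors]
    constructor
    · rintro ⟨⟨⟨hs, -⟩, ht, -⟩, h⟩
      exact ⟨⟨⟨hs.trans hdn, hn⟩, ht.trans hdn, hn⟩, h⟩
    · rintro ⟨-, rfl⟩
      exact ⟨⟨⟨Nat.dvd_lcm_left s t, hd0⟩, Nat.dvd_lcm_right s t, hd0⟩, rfl⟩
  · rintro ⟨s, t⟩ h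
    simp only [Finset.mem_product, Nat.mem_divisors] at h ⊢
    exact ⟨Nat.lcm_dvd h.1.1 h.2.1, hn⟩

theorem carlitz_relation_cycleCount
    (m n : ℕ) (T1 : Matrix (Fin m) (Fin m) ℚ) (T2 : Matrix (Fin n) (Fin n) ℚ)
    (N : ℕ) (hN : 0 < N) :
    ∑ p ∈ (N.divisors ×ˢ N.divisors).filter (fun p => Nat.lcm p.1 p.2 = N),
        (Nat.gcd p.1 p.2 : ℚ) * cycleCount T1 p.1 * cycleCount T2 p.2 =
      cycleCount (T1 ⊗ₖ T2) N := by
  refine (sum_divisors_mul_eq_trace_iff (T1 ⊗ₖ T2) (fun N =>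
    ∑ p ∈ (N.divisors ×ˢ N.divisors).filter (fun p => Nat.lcm p.1 p.2 = N),
      (Nat.gcd p.1 p.2 : ℚ) * cycleCount T1 p.1 * cycleCount T2 p.2)).1 (fun k hk => ?_) N hN
  rw [Matrix.kronecker_pow, Matrix.trace_kronecker, ← sum_divisors_mul_cycleCount T1 hk,
    ← sum_divisors_mul_cycleCount T2 hk, Finset.sum_mul_sum, ← Finset.sum_product',
    ← sum_divisors_sum_lcm_eq _ hk.ne']
  refine Finset.sum_congr rfl fun d _ => ?_
  rw [Finset.mul_sum]
  refine Finset.sum_congr rfl fun p hp => ?_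
  have hgl : (Nat.gcd p.1 p.2 : ℚ) * d = p.1 * p.2 := by
    rw [← (Finset.mem_filter.1 hp).2]
    exact_mod_cast Nat.gcd_mul_lcm p.1 p.2
  linear_combination cycleCount T1 p.1 * cycleCount T2 p.2 * hgl
end
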